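/- arXiv:math-ph/9905008 — 2 statements merged into one kernel-verified Lean document; each statement's English description precedes it below -/
import Mathlib

section
/- For every n ≥ 1, the Sturmian sequence value v_{α,0}(n) equals the n-th letter c_α(n) of the infinite word c_α; i.e., v_{α,0} restricted to {1,2,3,…} coincides with c_α. -/
open scoped Classical

noncomputable section

/-- The Sturmian potential `v_{α,θ}(n) = χ_{[1-α,1)}(nα + θ mod 1)`. -/
def sturmian (α θ : ℝ) (n : ℤ) : ℝ :=
  if Int.fract (n * α + θ) ∈ Set.Ico (1 - α) 1 then 1 else 0

/-- Iterates of the Gauss map, starting at `α`. -/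
def cfGauss (α : ℝ) : ℕ → ℝ
  | 0 => α
  | n + 1 => Int.fract (cfGauss α n)⁻¹

/-- The continued fraction coefficients `a_n` of `α = [a_1, a_2, …]` (for `n ≥ 1`):
`a_1 = ⌊1/α⌋`, `a_2 = ⌊1/fract(1/α)⌋`, … . -/
def cfCoeff (α : ℝ) (n : ℕ) : ℕ := ⌊(cfGauss α (n - 1))⁻¹⌋₊

/-- The standard words, with an index shift: `sWord a n` is `s_{n-1}`.  Thus
`sWord a 0 = s_{-1} = 1`, `sWord a 1 = s_0 = 0`, `sWord a 2 = s_1 = 0^{a_1 - 1} 1`, and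
`sWord a (n+1) = s_n = s_{n-1}^{a_n} s_{n-2}` for `n ≥ 2`. -/
def sWord (a : ℕ → ℕ) : ℕ → List ℝ
  | 0 => [1]
  | 1 => [0]
  | 2 => List.replicate (a 1 - 1) (0 : ℝ) ++ [1]
  | n + 3 => (List.replicate (a (n + 2)) (sWord a (n + 2))).flatten ++ sWord a (n + 1)

/-- The `n`-th letter (for `n ≥ 1`) of the one-sided infinite word `c_α = lim s_n`:
since `|s_n| ≥ n`, it is the `n`-th letter of `s_n`. -/
def cword (α : ℝ) (n : ℕ) : ℝ := (sWord (cfCoeff α) (n + 1)).getD (n - 1) 0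

/-- `w` is a (finite) prefix of the one-sided infinite word `c_α`. -/
def IsPrefC (α : ℝ) (w : List ℝ) : Prop :=
  w = (List.range w.length).map fun i => cword α (i + 1)

/-- The one-step transfer matrix `T(λ,E,a) = [[E - λa, -1], [1, 0]]`. -/
def transferT (lam : ℝ) (E : ℂ) (a : ℝ) : Matrix (Fin 2) (Fin 2) ℂ :=
  !![E - lam * a, -1; 1, 0]

/-- The transfer matrix over a word `w = w_1 … w_n`:
`M(λ,E,w) = T(λ,E,w_n) ⋯ T(λ,E,w_1)`. -/
def transferM (lam : ℝ) (E : ℂ) : List ℝ → Matrix (Fin 2) (Fin 2) ℂ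
  | [] => 1
  | a :: w => transferM lam E w * transferT lam E a

/-- The operator norm on `ℂ²` (with the euclidean norm) of a `2 × 2` complex matrix. -/
def opNorm (A : Matrix (Fin 2) (Fin 2) ℂ) : ℝ :=
  ‖Matrix.toEuclideanCLM (𝕜 := ℂ) A‖

/-- The word `v_{α,θ}^n = v_{α,θ}(1) … v_{α,θ}(n)`. -/
def sturmianWord (α θ : ℝ) (n : ℕ) : List ℝ :=
  (List.range n).map fun k => sturmian α θ (k + 1)

/-- The set of finite nonempty subwords of a two-sided sequence `v : ℤ → ℝ`. -/
def SubZ (v : ℤ → ℝ) : Set (List ℝ) :=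
  {w | w ≠ [] ∧ ∃ k : ℤ, w = (List.range w.length).map fun i => v (k + i)}

/-- The set of finite nonempty subwords of the one-sided word `c_α` (indexed from `1`). -/
def SubC (α : ℝ) : Set (List ℝ) :=
  {w | w ≠ [] ∧ ∃ k : ℕ, 1 ≤ k ∧ w = (List.range w.length).map fun i => cword α (k + i)}

/-- `W_α`, the set of all finite nonempty subwords of the sequences `v_{α,θ}`, `θ ∈ [0,1)`. -/
def Walpha (α : ℝ) : Set (List ℝ) :=
  {w | ∃ θ ∈ Set.Ico (0 : ℝ) 1, w ∈ SubZ (sturmian α θ)}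

/-- `α` is a bounded density number: `limsup_{n→∞} (1/n) ∑_{j=1}^n a_j < ∞` for the
continued fraction coefficients `a_j` of `α`. -/
def BoundedDensity (α : ℝ) : Prop :=
  Filter.IsBoundedUnder (· ≤ ·) Filter.atTop
    (fun n : ℕ => (1 / n : ℝ) * ∑ j ∈ Finset.Icc 1 n, (cfCoeff α j : ℝ))

end

namespace SturmAux

noncomputable def q (α : ℝ) : ℕ → ℤ
  | 0 => 0
  | 1 => 1
  | n + 2 => (cfCoeff α (n + 1) : ℤ) * q α (n + 1) + q α n

noncomputable def p (α : ℝ) : ℕ → ℤ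
  | 0 => 1
  | 1 => 0
  | n + 2 => (cfCoeff α (n + 1) : ℤ) * p α (n + 1) + p α n

noncomputable def d (α : ℝ) (n : ℕ) : ℝ := q α n * α - p α n

lemma best (α : ℝ) (q p q' p' e k m : ℤ) (hq : 0 ≤ q) (hq' : 1 ≤ q')
    (hd : (q * α - p) * (q' * α - p') < 0) (he : q' * p - q * p' = e) (he2 : e * e = 1)
    (hk : 1 ≤ k) (hkq : k < q') : |q * α - p| ≤ |k * α - m| := by
  obtain ⟨x, hx⟩ : ∃ x, x = -e * (k * p' - m * q') := ⟨_, rfl⟩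
  obtain ⟨y, hy⟩ : ∃ y, y = e * (k * p - m * q) := ⟨_, rfl⟩
  have h1 : k = x * q + y * q' := by
    rw [hx, hy]
    have : k * (e * e) = k * (e * (q' * p - q * p')) := by rw [he]
    rw [he2] at this
    linarith
  have h2 : m = x * p + y * p' := by
    rw [hx, hy]
    have : m * (e * e) = m * (e * (q' * p - q * p')) := by rw [he]
    rw [he2] at this
    linarith
  have h3 : (k * α - m : ℝ) = x * (q * α - p) + y * (q' * α - p') := by
    rw [h1, h2]; push_cast; ring
  rw [h3]
  generalize (q * α - p : ℝ) = D at *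
  generalize (q' * α - p' : ℝ) = D' at *
  clear hx hy h2 h3 he
  have hxy : (1 ≤ x ∧ y ≤ 0) ∨ (x ≤ -1 ∧ 0 ≤ y) := by
    rcases lt_trichotomy y 0 with h | h | h
    · left
      refine ⟨?_, h.le⟩
      by_contra hc
      nlinarith
    · left
      refine ⟨?_, h.le⟩
      by_contra hc
      subst h
      nlinarith
    · right
      refine ⟨?_, h.le⟩
      by_contra hc
      nlinarith
  have hR : ((1:ℝ) ≤ x ∧ (y:ℝ) ≤ 0) ∨ ((x:ℝ) ≤ -1 ∧ (0:ℝ) ≤ y) := by exact_mod_cast hxy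
  generalize (x : ℝ) = X at *
  generalize (y : ℝ) = Y at *
  rcases lt_trichotomy D 0 with hD | hD | hD
  · have hD' : 0 < D' := by
      by_contra hc
      nlinarith
    rw [abs_of_neg hD]
    rcases hR with ⟨h, h'⟩ | ⟨h, h'⟩
    · refine le_trans ?_ (neg_le_abs _)
      nlinarith
    · refine le_trans ?_ (le_abs_self _)
      nlinarith
  · subst hD; rw [abs_zero]; exact abs_nonneg _
  · have hD' : D' < 0 := by
      by_contra hc
      nlinarith
    rw [abs_of_pos hD]
    rcases hR with ⟨h, h'⟩ | ⟨h, h'⟩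
    · refine le_trans ?_ (le_abs_self _)
      nlinarith
    · refine le_trans ?_ (neg_le_abs _)
      nlinarith

lemma gauss_mem (α : ℝ) (hirr : Irrational α) (hα : α ∈ Set.Ioo (0 : ℝ) 1) (n : ℕ) :
    Irrational (cfGauss α n) ∧ 0 < cfGauss α n ∧ cfGauss α n < 1 := by
  induction n with
  | zero => exact ⟨hirr, hα.1, hα.2⟩
  | succ n ih =>
    have h : Irrational (cfGauss α (n+1)) := by
      show Irrational (Int.fract (cfGauss α n)⁻¹)
      unfold Int.fract
      exact (irrational_inv_iff.2 ih.1).sub_intCast _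
    refine ⟨h, lt_of_le_of_ne (Int.fract_nonneg _) (Ne.symm h.ne_zero), Int.fract_lt_one _⟩

lemma coeff_pos (α : ℝ) (hirr : Irrational α) (hα : α ∈ Set.Ioo (0 : ℝ) 1) (n : ℕ) :
    1 ≤ cfCoeff α (n + 1) := by
  obtain ⟨_, h0, h1⟩ := gauss_mem α hirr hα n
  unfold cfCoeff
  simp only [Nat.add_sub_cancel]
  rw [Nat.one_le_floor_iff]
  exact (one_lt_inv₀ h0).2 h1 |>.le

lemma coeff_eq (α : ℝ) (hirr : Irrational α) (hα : α ∈ Set.Ioo (0 : ℝ) 1) (n : ℕ) :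
    (cfCoeff α (n + 1) : ℝ) = (cfGauss α n)⁻¹ - cfGauss α (n + 1) := by
  obtain ⟨_, h0, h1⟩ := gauss_mem α hirr hα n
  show ((⌊(cfGauss α n)⁻¹⌋₊ : ℕ) : ℝ) = (cfGauss α n)⁻¹ - Int.fract (cfGauss α n)⁻¹
  rw [Int.self_sub_fract, natCast_floor_eq_intCast_floor (inv_pos.2 h0).le]

lemma d_succ (α : ℝ) (hirr : Irrational α) (hα : α ∈ Set.Ioo (0 : ℝ) 1) (n : ℕ) :
    d α (n + 1) = - cfGauss α n * d α n := by
  induction n with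
  | zero => simp [d, q, p, cfGauss]
  | succ n ih =>
    have h0 := (gauss_mem α hirr hα n).2.1
    have h : d α (n + 2) = cfCoeff α (n + 1) * d α (n + 1) + d α n := by
      simp only [d, q, p]; push_cast; ring
    rw [h, coeff_eq α hirr hα, ih]
    field_simp
    ring

lemma d_ne (α : ℝ) (hirr : Irrational α) (hα : α ∈ Set.Ioo (0 : ℝ) 1) (n : ℕ) :
    d α n ≠ 0 := by
  induction n with
  | zero => simp [d, q, p]
  | succ n ih =>
    rw [d_succ α hirr hα]
    have := (gauss_mem α hirr hα n).2.1
    exact mul_ne_zero (neg_ne_zero.2 this.ne') ih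

lemma d_mul (α : ℝ) (hirr : Irrational α) (hα : α ∈ Set.Ioo (0 : ℝ) 1) (n : ℕ) :
    d α n * d α (n + 1) < 0 := by
  rw [d_succ α hirr hα]
  have h1 := (gauss_mem α hirr hα n).2.1
  have h2 : 0 < d α n * d α n := mul_self_pos.2 (d_ne α hirr hα n)
  nlinarith [mul_pos h1 h2]

lemma det (α : ℝ) (n : ℕ) : q α (n+1) * p α n - q α n * p α (n+1) = (-1) ^ n := by
  induction n with
  | zero => simp [q, p]
  | succ n ih =>
    simp only [q, p, pow_succ]
    rw [← ih]; ring

lemma q_pos (α : ℝ) (hirr : Irrational α) (hα : α ∈ Set.Ioo (0 : ℝ) 1) (n : ℕ) :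
    0 ≤ q α n ∧ 1 ≤ q α (n + 1) := by
  induction n with
  | zero => simp [q]
  | succ n ih =>
    have : (1:ℤ) ≤ cfCoeff α (n + 1) := by exact_mod_cast coeff_pos α hirr hα n
    refine ⟨by linarith, ?_⟩
    simp only [q]
    nlinarith

lemma q_ge (α : ℝ) (hirr : Irrational α) (hα : α ∈ Set.Ioo (0 : ℝ) 1) (n : ℕ) :
    (n + 1 : ℤ) ≤ q α (n + 2) := by
  induction n with
  | zero => simpa using (q_pos α hirr hα 1).2
  | succ n ih =>
    have h : (1:ℤ) ≤ cfCoeff α (n + 2) := by exact_mod_cast coeff_pos α hirr hα (n+1)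
    have h2 := (q_pos α hirr hα n).2
    have h3 : q α (n + 1 + 2) = cfCoeff α (n + 2) * q α (n + 2) + q α (n + 1) := rfl
    rw [h3]
    push_cast
    nlinarith

lemma floor_shift (α : ℝ) (hirr : Irrational α) (hα : α ∈ Set.Ioo (0 : ℝ) 1) (n : ℕ) (k : ℤ)
    (hk : 1 ≤ k) (hkq : k < q α (n + 1)) :
    ⌊((k + q α n : ℤ) : ℝ) * α⌋ = ⌊(k : ℝ) * α⌋ + p α n := by
  have hb : ∀ m : ℤ, |d α n| ≤ |k * α - m| := fun m =>
    best α (q α n) (p α n) (q α (n+1)) (p α (n+1)) ((-1)^n) k m (q_pos α hirr hα n).1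
      (q_pos α hirr hα n).2 (d_mul α hirr hα n) (det α n) (by rw [← mul_pow]; simp) hk hkq
  have h1 := hb ⌊(k : ℝ) * α⌋
  have h2 := hb (⌊(k : ℝ) * α⌋ + 1)
  have h3 := Int.floor_le ((k : ℝ) * α)
  have h4 := Int.lt_floor_add_one ((k : ℝ) * α)
  generalize ⌊(k : ℝ) * α⌋ = m at *
  push_cast at h2
  rw [abs_of_nonneg (a := k * α - m) (by linarith)] at h1
  rw [abs_of_neg (a := k * α - (m + 1)) (by linarith)] at h2
  have h5 := (abs_le.1 h1).1
  have h6 := (abs_le.1 h2).2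
  have hne : ((k + q α n : ℤ) : ℝ) * α ≠ ((m + p α n + 1 : ℤ) : ℝ) := by
    have : Irrational (((k + q α n : ℤ) : ℝ) * α) :=
      hirr.intCast_mul (by have := (q_pos α hirr hα n).1; omega)
    exact this.ne_int _
  rw [Int.floor_eq_iff]
  unfold d at h5 h6
  push_cast at hne ⊢
  refine ⟨by linarith, lt_of_le_of_ne (by linarith) hne⟩

/-- letters, indexed from zero -/
noncomputable def V (α : ℝ) (i : ℕ) : ℝ := ((⌊((i + 2 : ℤ) : ℝ) * α⌋ - ⌊((i + 1 : ℤ) : ℝ) * α⌋ : ℤ) : ℝ)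

lemma sturmian_eq (α : ℝ) (hα : α ∈ Set.Ioo (0 : ℝ) 1) (i : ℕ) :
    sturmian α 0 ((i + 1 : ℕ) : ℤ) = V α i := by
  unfold sturmian V
  have e : ((i + 2 : ℤ) : ℝ) * α = ((i + 1 : ℤ) : ℝ) * α + α := by push_cast; ring
  have e2 : (((i + 1 : ℕ) : ℤ) : ℝ) * α + 0 = ((i + 1 : ℤ) : ℝ) * α := by push_cast; ring
  rw [e, e2]
  generalize ((i + 1 : ℤ) : ℝ) * α = x
  have h3 := Int.floor_le x
  have h4 := Int.lt_floor_add_one x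
  obtain ⟨h0, h1⟩ := hα
  unfold Int.fract
  split_ifs with h
  · have : ⌊x + α⌋ = ⌊x⌋ + 1 := by
      rw [Int.floor_eq_iff]
      push_cast
      constructor <;> linarith [h.1]
    rw [this]; simp
  · have : ⌊x + α⌋ = ⌊x⌋ := by
      rw [Int.floor_eq_iff]
      have : x - ⌊x⌋ < 1 - α := by
        by_contra hc
        exact h ⟨not_lt.1 hc, by linarith⟩
      constructor <;> linarith
    rw [this]; simp

lemma V_shift (α : ℝ) (hirr : Irrational α) (hα : α ∈ Set.Ioo (0 : ℝ) 1) (n L i : ℕ)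
    (hL : (L : ℤ) = q α n) (hi : (i : ℤ) + 2 < q α (n + 1)) : V α (L + i) = V α i := by
  unfold V
  have h1 := floor_shift α hirr hα n (i + 1) (by omega) (by omega)
  have h2 := floor_shift α hirr hα n (i + 2) (by omega) (by omega)
  rw [← hL] at h1 h2
  have e1 : ((L + i : ℕ) : ℤ) + 1 = i + 1 + L := by push_cast; ring
  have e2 : ((L + i : ℕ) : ℤ) + 2 = i + 2 + L := by push_cast; ring
  rw [e1, e2, h1, h2]
  congr 1
  ring

lemma word_pow (W : ℕ → ℝ) (L r a : ℕ) (h : ∀ i, L + i < a * L + r → W (L + i) = W i) :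
    (List.range (a * L + r)).map W
      = (List.replicate a ((List.range L).map W)).flatten ++ (List.range r).map W := by
  induction a with
  | zero => simp
  | succ a ih =>
    have e : (a + 1) * L + r = L + (a * L + r) := by ring
    rw [e, List.range_add, List.map_append, List.replicate_succ, List.flatten_cons,
      List.append_assoc, ← ih (fun i hi => h i (by rw [e]; omega)), List.map_map]
    congr 1
    apply List.map_congr_left
    intro i hi
    rw [List.mem_range] at hi
    exact h i (by rw [e]; omega)

lemma base1 (α : ℝ) (hirr : Irrational α) (hα : α ∈ Set.Ioo (0 : ℝ) 1) :
    sWord (cfCoeff α) 2 = (List.range (cfCoeff α 1)).map (V α) := by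
  have hpos := coeff_pos α hirr hα 0
  have heq := coeff_eq α hirr hα 0
  obtain ⟨_, h0, h1⟩ := gauss_mem α hirr hα 1
  obtain ⟨ha0, ha1⟩ := hα
  simp only [zero_add] at *
  change _ = α⁻¹ - _ at heq
  have hm : (cfCoeff α 1 + cfGauss α 1) * α = 1 := by
    rw [heq]; field_simp; ring
  obtain ⟨b, hb⟩ : ∃ b, cfCoeff α 1 = b + 1 := ⟨cfCoeff α 1 - 1, by omega⟩
  have hg : 0 < cfGauss α 1 * α := mul_pos h0 ha0
  have hg2 : cfGauss α 1 * α < α := by nlinarith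
  simp only [sWord]
  rw [hb] at hm ⊢
  push_cast at hm
  rw [List.range_succ, List.map_append, Nat.add_sub_cancel]
  have hz : ∀ j : ℕ, j ≤ b → ⌊((j + 1 : ℤ) : ℝ) * α⌋ = 0 := by
    intro j hj
    have hj' : (j : ℝ) ≤ b := by exact_mod_cast hj
    rw [Int.floor_eq_iff]
    push_cast
    constructor
    · positivity
    · nlinarith
  congr 1
  · symm
    rw [List.eq_replicate_iff]
    refine ⟨by simp, ?_⟩
    intro x hx
    simp only [List.mem_map, List.mem_range] at hx
    obtain ⟨j, hj, rfl⟩ := hx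
    unfold V
    have := hz (j + 1) (by omega)
    have e : (((j + 1 : ℕ) : ℤ) + 1) = (j + 2 : ℤ) := by push_cast; ring
    rw [e] at this
    rw [this, hz j (by omega)]; simp
  · simp only [List.map_cons, List.map_nil, List.cons.injEq, and_true]
    unfold V
    rw [hz b le_rfl]
    have : ⌊((b + 2 : ℤ) : ℝ) * α⌋ = 1 := by
      rw [Int.floor_eq_iff]
      push_cast
      constructor <;> nlinarith
    rw [this]; simp

lemma V_q3 (α : ℝ) (hirr : Irrational α) (hα : α ∈ Set.Ioo (0 : ℝ) 1) (N : ℕ)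
    (hN : ((N + 1 : ℕ) : ℤ) = q α 3) : V α N = 0 := by
  have hpos := coeff_pos α hirr hα 0
  have d1 : d α 1 = α := by simp [d, q, p]
  have d2 := d_succ α hirr hα 1
  have d3 := d_succ α hirr hα 2
  have d2' : d α 2 = cfCoeff α 1 * α - 1 := by simp [d, q, p]
  obtain ⟨_, h0, h1⟩ := gauss_mem α hirr hα 1
  obtain ⟨_, h0', h1'⟩ := gauss_mem α hirr hα 2
  obtain ⟨ha0, ha1⟩ := hα
  have hp : (1 : ℝ) ≤ cfCoeff α 1 := by exact_mod_cast hpos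
  have hneg : d α 2 < 0 := by
    norm_num at d2
    rw [d2, d1]; nlinarith [mul_pos h0 ha0]
  norm_num at d3
  have hd0 : 0 < d α 3 := by nlinarith
  have hd1 : d α 3 < 1 - α := by nlinarith
  have hq : ((N : ℝ) + 1) = q α 3 := by exact_mod_cast hN
  have hd : d α 3 = ((N : ℝ) + 1) * α - p α 3 := by rw [hq]; rfl
  unfold V
  have f1 : ⌊((N + 1 : ℤ) : ℝ) * α⌋ = p α 3 := by
    rw [Int.floor_eq_iff]; push_cast; constructor <;> linarith
  have f2 : ⌊((N + 2 : ℤ) : ℝ) * α⌋ = p α 3 := by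
    rw [Int.floor_eq_iff]; push_cast; constructor <;> linarith
  rw [f1, f2]; simp

lemma base2 (α : ℝ) (hirr : Irrational α) (hα : α ∈ Set.Ioo (0 : ℝ) 1) :
    sWord (cfCoeff α) 3 = (List.range (cfCoeff α 2 * cfCoeff α 1 + 1)).map (V α) := by
  have hpos := coeff_pos α hirr hα 0
  have q2 : q α 2 = cfCoeff α 1 := by simp [q]
  have q3 : q α 3 = cfCoeff α 2 * cfCoeff α 1 + 1 := by simp [q]
  have e : sWord (cfCoeff α) 3
    = (List.replicate (cfCoeff α 2) (sWord (cfCoeff α) 2)).flatten ++ [0] := by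
    simp [sWord]
  rw [e, base1 α hirr hα, List.range_succ, List.map_append]
  have := word_pow (V α) (cfCoeff α 1) 0 (cfCoeff α 2) (by
    intro i hi
    refine V_shift α hirr hα 2 _ i q2.symm ?_
    show _ < q α 3
    rw [q3]
    zify at hi hpos
    simp only [zero_add] at hpos
    linarith)
  simp only [add_zero, List.range_zero, List.map_nil, List.append_nil] at this
  rw [← this]
  congr 1
  simp only [List.map_cons, List.map_nil, List.cons.injEq, and_true]
  exact (V_q3 α hirr hα _ (by rw [q3]; push_cast; ring)).symm

lemma main (α : ℝ) (hirr : Irrational α) (hα : α ∈ Set.Ioo (0 : ℝ) 1) (n : ℕ) :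
    sWord (cfCoeff α) (n + 2) = (List.range (q α (n + 2)).toNat).map (V α) ∧
    sWord (cfCoeff α) (n + 3) = (List.range (q α (n + 3)).toNat).map (V α) := by
  induction n with
  | zero =>
    constructor
    · rw [zero_add, base1 α hirr hα]; simp [q]
    · rw [zero_add, base2 α hirr hα]
      congr 2
      have q3 : q α (0 + 3) = ((cfCoeff α 2 * cfCoeff α 1 + 1 : ℕ) : ℤ) := by simp [q]
      rw [zero_add] at q3
      rw [q3, Int.toNat_natCast]
  | succ n ih =>
    refine ⟨ih.2, ?_⟩
    have hq : q α (n + 4) = cfCoeff α (n + 3) * q α (n + 3) + q α (n + 2) := rfl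
    have hs : sWord (cfCoeff α) (n + 4) = (List.replicate (cfCoeff α (n + 3))
      (sWord (cfCoeff α) (n + 3))).flatten ++ sWord (cfCoeff α) (n + 2) := rfl
    show sWord (cfCoeff α) (n + 4) = (List.range (q α (n + 4)).toNat).map (V α)
    have g2 := q_ge α hirr hα n
    have g3 := q_ge α hirr hα (n + 1)
    have g3' : (n + 1 : ℕ) + 1 ≤ q α (n + 3) := g3
    rw [hs, ih.1, ih.2]
    obtain ⟨L, hL⟩ : ∃ L : ℕ, (L : ℤ) = q α (n + 3) := ⟨(q α (n+3)).toNat, by omega⟩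
    obtain ⟨r, hr⟩ : ∃ r : ℕ, (r : ℤ) = q α (n + 2) := ⟨(q α (n+2)).toNat, by omega⟩
    have hq' : q α (n + 4) = ((cfCoeff α (n + 3) * L + r : ℕ) : ℤ) := by
      rw [hq, ← hL, ← hr]; push_cast; ring
    have hL2 : 2 ≤ L := by omega
    rw [hq', ← hL, ← hr, Int.toNat_natCast, Int.toNat_natCast, Int.toNat_natCast]
    refine (word_pow _ _ _ _ ?_).symm
    intro i hi
    refine V_shift α hirr hα (n + 3) L i hL ?_
    show _ < q α (n + 4)
    rw [hq']
    generalize cfCoeff α (n + 3) * L + r = T at *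
    omega

end SturmAux

theorem sturmian_zero_eq_cword
    (α : ℝ) (hirr : Irrational α) (hα : α ∈ Set.Ioo (0 : ℝ) 1)
    (n : ℕ) (hn : 1 ≤ n) :
    sturmian α 0 (n : ℤ) = cword α n := by
  obtain ⟨i, rfl⟩ : ∃ i, n = i + 1 := ⟨n - 1, by omega⟩
  rw [SturmAux.sturmian_eq α hα]
  unfold cword
  have h := (SturmAux.main α hirr hα i).1
  have g := SturmAux.q_ge α hirr hα i
  show _ = (sWord (cfCoeff α) (i + 2)).getD i 0
  rw [h, List.getD_eq_getElem _ _ (by simp; omega)]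
  simp
end

section
/- For every n ∈ ℕ₀ there exists a unique n-partition of c_α of the form c_α = z_1 z_2 z_3 ⋯; that is, there is a unique sequence (z_j)_{j∈ℕ} of words with z_j ∈ {s_{n−1}, s_n} for all j such that for every m the concatenation z_1 z_2 ⋯ z_m is a prefix of c_α. -/
open scoped Classical

/-- `Gen u v x`: the word `x` is a finite concatenation of copies of `u` and `v`. -/
inductive Gen (u v : List ℝ) : List ℝ → Prop
  | nil : Gen u v []
  | left (x : List ℝ) : Gen u v x → Gen u v (u ++ x)
  | right (x : List ℝ) : Gen u v x → Gen u v (v ++ x)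

lemma Gen.symm {u v x : List ℝ} (h : Gen u v x) : Gen v u x := by
  induction h with
  | nil => exact Gen.nil
  | left x _ ih => exact Gen.right x ih
  | right x _ ih => exact Gen.left x ih

lemma Gen.append {u v x y : List ℝ} (h : Gen u v x) (hy : Gen u v y) : Gen u v (x ++ y) := by
  induction h with
  | nil => simpa using hy
  | left x _ ih => rw [List.append_assoc]; exact Gen.left _ ih
  | right x _ ih => rw [List.append_assoc]; exact Gen.right _ ih

lemma Gen.rep {u v x : List ℝ} (h : Gen u v x) (k : ℕ) :
    Gen u v (List.replicate k x).flatten := by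
  induction k with
  | zero => simpa using Gen.nil
  | succ k ih => simpa [List.replicate_succ] using h.append ih

lemma Gen.one_left (u v : List ℝ) : Gen u v u := by simpa using Gen.left (v := v) (u := u) [] Gen.nil
lemma Gen.one_right (u v : List ℝ) : Gen u v v := by
  simpa using Gen.right (v := v) (u := u) [] Gen.nil

lemma Gen.of_list {u v : List ℝ} (P : List (List ℝ)) (h : ∀ b ∈ P, b = u ∨ b = v) :
    Gen u v P.flatten := by
  induction P with
  | nil => exact Gen.nil
  | cons b P ih =>
    have h1 := ih (fun b hb => h b (List.mem_cons_of_mem _ hb))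
    rcases h b (by simp) with rfl | rfl
    · simpa using Gen.left _ h1
    · simpa using Gen.right _ h1

lemma Gen.to_list {u v x : List ℝ} (h : Gen u v x) :
    ∃ P : List (List ℝ), (∀ b ∈ P, b = u ∨ b = v) ∧ P.flatten = x := by
  induction h with
  | nil => exact ⟨[], by simp, rfl⟩
  | left x _ ih =>
    obtain ⟨P, h1, h2⟩ := ih
    exact ⟨u :: P, by simpa using h1, by simp [h2]⟩
  | right x _ ih =>
    obtain ⟨P, h1, h2⟩ := ih
    exact ⟨v :: P, by simpa using h1, by simp [h2]⟩

lemma Gen.refine {u w x : List ℝ} (h : Gen u (u ++ w) x) : Gen u w x := by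
  induction h with
  | nil => exact Gen.nil
  | left x _ ih => exact Gen.left x ih
  | right x _ ih => rw [List.append_assoc]; exact Gen.left _ (Gen.right _ ih)

lemma Gen.head {u w x : List ℝ} (h : Gen u (u ++ w) x) (hx : x ≠ []) :
    ∃ y, x = u ++ y ∧ Gen u w y := by
  cases h with
  | nil => exact absurd rfl hx
  | left x h => exact ⟨x, rfl, h.refine⟩
  | right x h => exact ⟨w ++ x, by simp, Gen.right _ h.refine⟩

/-- Words starting with the two different blocks of a noncommuting pair cannot be
long prefixes of a common word. -/
lemma gen_key : ∀ (N : ℕ) (u v : List ℝ), u.length + v.length ≤ N → u ++ v ≠ v ++ u →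
    ∀ p q W : List ℝ, Gen u v p → Gen u v q →
      u.length + v.length ≤ (u ++ p).length → u.length + v.length ≤ (v ++ q).length →
      u ++ p <+: W → v ++ q <+: W → False := by
  intro N
  induction N with
  | zero =>
    intro u v hN hne
    have hu : u = [] := List.length_eq_zero_iff.mp (by omega)
    simp [hu] at hne
  | succ N ih =>
    have main : ∀ u v : List ℝ, u.length + v.length ≤ N + 1 → u ++ v ≠ v ++ u → u <+: v →
        ∀ p q W : List ℝ, Gen u v p → Gen u v q →
        u.length + v.length ≤ (u ++ p).length → u.length + v.length ≤ (v ++ q).length →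
        u ++ p <+: W → v ++ q <+: W → False := by
      rintro u _ hN hne ⟨w, rfl⟩ p q W hp hq lp lq hpW hqW
      obtain ⟨W, rfl⟩ : u <+: W := (List.prefix_append u p).trans hpW
      rw [List.append_assoc, List.prefix_append_right_inj] at hqW
      rw [List.prefix_append_right_inj] at hpW
      have hu : u ≠ [] := by rintro rfl; simp at hne
      have hul : 0 < u.length := List.length_pos_iff.mpr hu
      have hpne : p ≠ [] := by
        rintro rfl
        simp only [List.length_append, List.length_nil] at lp
        omega
      obtain ⟨y, rfl, hy⟩ := hp.head hpne
      simp only [List.length_append] at lp lq hN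
      refine ih u w (by omega) ?_ y q W hy hq.refine ?_ ?_ hpW hqW
      · intro h
        apply hne
        rw [List.append_assoc, h]
      · simp only [List.length_append]; omega
      · simp only [List.length_append]; omega
    intro u v hN hne p q W hp hq lp lq hpW hqW
    rcases List.prefix_or_prefix_of_prefix ((List.prefix_append u p).trans hpW)
      ((List.prefix_append v q).trans hqW) with h | h
    · exact main u v hN hne h p q W hp hq lp lq hpW hqW
    · exact main v u (by omega) hne.symm h q p W hq.symm hp.symm (by omega) (by omega) hqW hpW

lemma cfGauss_irr {α : ℝ} (hirr : Irrational α) (hα : α ∈ Set.Ioo (0 : ℝ) 1) (k : ℕ) :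
    Irrational (cfGauss α k) ∧ 0 < cfGauss α k ∧ cfGauss α k < 1 := by
  induction k with
  | zero => exact ⟨hirr, hα.1, hα.2⟩
  | succ k ih =>
    have h1 : Irrational (cfGauss α (k + 1)) := by
      have h : Irrational ((cfGauss α k)⁻¹ - (⌊(cfGauss α k)⁻¹⌋ : ℤ)) := ih.1.inv.sub_intCast _
      exact h
    refine ⟨h1, lt_of_le_of_ne (Int.fract_nonneg _) (Ne.symm h1.ne_zero), Int.fract_lt_one _⟩

lemma cfCoeff_pos {α : ℝ} (hirr : Irrational α) (hα : α ∈ Set.Ioo (0 : ℝ) 1) (k : ℕ) :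
    0 < cfCoeff α k := by
  obtain ⟨_, h0, h1⟩ := cfGauss_irr hirr hα (k - 1)
  exact Nat.floor_pos.mpr ((one_le_inv₀ h0).mpr h1.le)

lemma sWord_succ (a : ℕ → ℕ) (n : ℕ) : sWord a (n + 3) =
    (List.replicate (a (n + 2)) (sWord a (n + 2))).flatten ++ sWord a (n + 1) := by
  rw [sWord]

lemma rep_comm (x : List ℝ) (k : ℕ) :
    (List.replicate k x).flatten ++ x = x ++ (List.replicate k x).flatten := by
  induction k with
  | zero => simp
  | succ k ih => simp [List.replicate_succ, ih]

lemma sWord_noncomm (a : ℕ → ℕ) (n : ℕ) :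
    sWord a n ++ sWord a (n + 1) ≠ sWord a (n + 1) ++ sWord a n := by
  induction n with
  | zero => simp [sWord]
  | succ n ih =>
    cases n with
    | zero =>
      intro h
      have h2 := congrArg List.getLast? h
      simp [sWord, List.getLast?_append, List.getLast?_cons] at h2
    | succ n =>
      intro h
      apply ih
      rw [sWord_succ, ← List.append_assoc, ← rep_comm, List.append_assoc, List.append_assoc,
        List.append_cancel_left_eq] at h
      exact h.symm

lemma sWord_length_pos (a : ℕ → ℕ) : ∀ n : ℕ, 0 < (sWord a n).length ∧ 0 < (sWord a (n+1)).length := by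
  intro n
  induction n with
  | zero => simp [sWord]
  | succ n ih =>
    refine ⟨ih.2, ?_⟩
    cases n with
    | zero => simp [sWord]
    | succ n =>
      rw [sWord_succ, List.length_append]
      omega

lemma sWord_succ_pos (a : ℕ → ℕ) (ha : ∀ k, 0 < a k) (n : ℕ) : ∃ y, sWord a (n + 3) =
    sWord a (n + 2) ++ y ++ sWord a (n + 1) := by
  obtain ⟨b, hb⟩ := Nat.exists_eq_succ_of_ne_zero (ha (n + 2)).ne'
  refine ⟨(List.replicate b (sWord a (n + 2))).flatten, ?_⟩
  rw [sWord_succ, hb]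
  simp [List.replicate_succ]

lemma sWord_length (a : ℕ → ℕ) (ha : ∀ k, 0 < a k) (n : ℕ) : n < (sWord a (n + 2)).length := by
  induction n with
  | zero => exact (sWord_length_pos a 2).1
  | succ n ih =>
    obtain ⟨y, hy⟩ := sWord_succ_pos a ha n
    have := (sWord_length_pos a (n + 1)).1
    rw [hy]
    simp only [List.length_append]
    omega

lemma sWord_prefix (a : ℕ → ℕ) (ha : ∀ k, 0 < a k) (n k : ℕ) :
    sWord a (n + 2) <+: sWord a (n + 2 + k) := by
  induction k with
  | zero => exact List.prefix_refl _
  | succ k ih =>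
    refine ih.trans ?_
    obtain ⟨y, hy⟩ := sWord_succ_pos a ha (n + k)
    rw [show n + 2 + (k + 1) = n + k + 3 by ring, show n + 2 + k = n + k + 2 by ring, hy,
      List.append_assoc]
    exact List.prefix_append _ _

lemma sWord_gen (a : ℕ → ℕ) (n k : ℕ) :
    Gen (sWord a n) (sWord a (n + 1)) (sWord a (n + k)) ∧
    Gen (sWord a n) (sWord a (n + 1)) (sWord a (n + k + 1)) := by
  induction k with
  | zero => exact ⟨Gen.one_left _ _, Gen.one_right _ _⟩
  | succ k ih =>
    refine ⟨ih.2, ?_⟩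
    rcases hm : n + k with _ | m
    · obtain ⟨rfl, rfl⟩ : n = 0 ∧ k = 0 := by omega
      have h := ((Gen.one_right (sWord a 0) (sWord a 1)).rep (a 1 - 1)).append (Gen.one_left _ _)
      have e : sWord a 2 = (List.replicate (a 1 - 1) (sWord a 1)).flatten ++ sWord a 0 := by
        simp [sWord]
      rw [← e] at h
      exact h
    · rw [hm] at ih
      rw [show n + (k + 1) + 1 = m + 3 by omega, sWord_succ]
      exact (ih.2.rep _).append ih.1

/-- The prefix of `c_α` of length `N`. -/
noncomputable def cPref (α : ℝ) (N : ℕ) : List ℝ := (List.range N).map fun i => cword α (i + 1)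

lemma cPref_prefix (α : ℝ) {M N : ℕ} (h : M ≤ N) : cPref α M <+: cPref α N := by
  obtain ⟨k, rfl⟩ := Nat.exists_eq_add_of_le h
  unfold cPref
  rw [List.range_add, List.map_append]
  exact List.prefix_append _ _

lemma isPrefC_iff (α : ℝ) (w : List ℝ) : IsPrefC α w ↔ ∃ N, w <+: cPref α N := by
  constructor
  · intro h
    exact ⟨w.length, by unfold IsPrefC at h; rw [cPref, ← h]⟩
  · rintro ⟨N, h⟩
    have h1 : w.length ≤ N := by simpa [cPref] using h.length_le
    have h2 : w <+: cPref α w.length :=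
      List.prefix_of_prefix_length_le h (cPref_prefix α h1) (by simp [cPref])
    exact h2.eq_of_length (by simp [cPref])

lemma sWord_isPrefC (α : ℝ) (ha : ∀ k, 0 < cfCoeff α k) (n : ℕ) :
    IsPrefC α (sWord (cfCoeff α) (n + 2)) := by
  unfold IsPrefC
  refine List.ext_getElem (by simp) ?_
  intro i h1 h2
  have h3 := sWord_length (cfCoeff α) ha i
  simp only [List.getElem_map, List.getElem_range, cword]
  rw [show i + 1 - 1 = i by omega, show i + 1 + 1 = i + 2 by omega, List.getD_eq_getElem _ _ h3]
  rcases le_total n i with h | h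
  · obtain ⟨k, rfl⟩ := Nat.exists_eq_add_of_le h
    have := sWord_prefix (cfCoeff α) ha n k
    rw [show n + 2 + k = n + k + 2 by ring] at this
    exact this.getElem h1
  · obtain ⟨k, rfl⟩ := Nat.exists_eq_add_of_le h
    have := sWord_prefix (cfCoeff α) ha i k
    rw [show i + 2 + k = i + k + 2 by ring] at this
    exact (this.getElem h3).symm

/-- A list of blocks which extends to arbitrarily long partitions of prefixes of `c_α`. -/
def GoodP (α : ℝ) (u v : List ℝ) (P : List (List ℝ)) : Prop :=
  ∀ L : ℕ, ∃ Q : List (List ℝ), (∀ b ∈ Q, b = u ∨ b = v) ∧ L ≤ Q.flatten.length ∧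
    IsPrefC α (P ++ Q).flatten

lemma GoodP.step {α : ℝ} {u v : List ℝ} {P : List (List ℝ)} (h : GoodP α u v P) :
    ∃ b, (b = u ∨ b = v) ∧ GoodP α u v (P ++ [b]) := by
  by_contra hc
  push Not at hc
  have hu := hc u (Or.inl rfl)
  have hv := hc v (Or.inr rfl)
  unfold GoodP at hu hv
  push Not at hu hv
  obtain ⟨L1, hu⟩ := hu
  obtain ⟨L2, hv⟩ := hv
  obtain ⟨Q, hQ, hL, hp⟩ := h (L1 + L2 + u.length + v.length + 1)
  cases Q with
  | nil => simp at hL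
  | cons b Q =>
    simp only [List.flatten_cons, List.length_append] at hL
    have hQ' : ∀ b ∈ Q, b = u ∨ b = v := fun b hb => hQ b (List.mem_cons_of_mem _ hb)
    rcases hQ b (by simp) with rfl | rfl
    · exact hu Q hQ' (by omega) (by simpa using hp)
    · exact hv Q hQ' (by omega) (by simpa using hp)

lemma GoodP.exists_seq {α : ℝ} {u v : List ℝ} (h : GoodP α u v []) :
    ∃ z : ℕ → List ℝ, (∀ j, z j = u ∨ z j = v) ∧ ∀ m, IsPrefC α ((List.range m).map z).flatten := by
  choose f hf1 hf2 using fun P : {P // GoodP α u v P} => P.2.step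
  let S : ℕ → {P // GoodP α u v P} := fun m =>
    Nat.rec ⟨[], h⟩ (fun _ P => ⟨P.1 ++ [f P], hf2 P⟩) m
  have hS : ∀ m, (List.range m).map (fun j => f (S j)) = (S m).1 := by
    intro m
    induction m with
    | zero => rfl
    | succ m ih => rw [List.range_succ, List.map_append, ih]; rfl
  refine ⟨fun j => f (S j), fun j => hf1 _, fun m => ?_⟩
  rw [hS]
  obtain ⟨Q, _, _, hp⟩ := (S m).2 0
  rw [isPrefC_iff] at hp ⊢
  obtain ⟨N, hN⟩ := hp
  rw [List.flatten_append] at hN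
  exact ⟨N, (List.prefix_append _ _).trans hN⟩

lemma flatten_length_ge (P : List (List ℝ)) (h : ∀ b ∈ P, 0 < b.length) :
    P.length ≤ P.flatten.length := by
  induction P with
  | nil => simp
  | cons b P ih =>
    have := ih (fun b hb => h b (List.mem_cons_of_mem _ hb))
    have := h b (by simp)
    simp only [List.length_cons, List.flatten_cons, List.length_append]
    omega

lemma no_split {α : ℝ} {u v : List ℝ} (hne : u ++ v ≠ v ++ u) (hu : 0 < u.length)
    (hv : 0 < v.length) {z w : ℕ → List ℝ} (hz : ∀ j, z j = u ∨ z j = v)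
    (hw : ∀ j, w j = u ∨ w j = v) (hz' : ∀ m, IsPrefC α ((List.range m).map z).flatten)
    (hw' : ∀ m, IsPrefC α ((List.range m).map w).flatten) (j : ℕ) (hj : ∀ i < j, z i = w i)
    (h1 : z j = u) (h2 : w j = v) : False := by
  have split : ∀ (y : ℕ → List ℝ) (L : ℕ), ((List.range (j + (1 + L))).map y).flatten =
      ((List.range j).map y).flatten ++ (y j ++ ((List.range L).map fun i => y (j + (1 + i))).flatten) := by
    intro y L
    rw [List.range_add, List.range_add]
    simp [Function.comp_def]
  have e : (List.range j).map z = (List.range j).map w :=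
    List.map_congr_left (fun i hi => hj i (List.mem_range.mp hi))
  set L := u.length + v.length with hL
  obtain ⟨N1, hN1⟩ := (isPrefC_iff _ _).1 (hz' (j + (1 + L)))
  obtain ⟨N2, hN2⟩ := (isPrefC_iff _ _).1 (hw' (j + (1 + L)))
  replace hN1 := hN1.trans (cPref_prefix α (le_max_left N1 N2))
  replace hN2 := hN2.trans (cPref_prefix α (le_max_right N1 N2))
  rw [split, e, h1] at hN1
  rw [split, h2] at hN2
  obtain ⟨W, hW⟩ := (List.prefix_append _ _).trans hN1
  rw [← hW, List.prefix_append_right_inj] at hN1 hN2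
  have len : ∀ y : ℕ → List ℝ, (∀ j, y j = u ∨ y j = v) →
      L ≤ ((List.range L).map fun i => y (j + (1 + i))).flatten.length := by
    intro y hy
    refine le_trans (by simp) (flatten_length_ge _ ?_)
    intro b hb
    obtain ⟨i, _, rfl⟩ := List.mem_map.mp hb
    rcases hy (j + (1 + i)) with h | h <;> simp only [h] <;> assumption
  have gen : ∀ y : ℕ → List ℝ, (∀ j, y j = u ∨ y j = v) →
      Gen u v ((List.range L).map fun i => y (j + (1 + i))).flatten := by
    intro y hy
    refine Gen.of_list _ ?_
    intro b hb
    obtain ⟨i, _, rfl⟩ := List.mem_map.mp hb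
    exact hy _
  have l1 := len z hz
  have l2 := len w hw
  refine gen_key L u v le_rfl hne _ _ W (gen z hz) (gen w hw) ?_ ?_ hN1 hN2
  · rw [List.length_append]; omega
  · rw [List.length_append]; omega

theorem unique_n_partition_of_c
    (α : ℝ) (hirr : Irrational α) (hα : α ∈ Set.Ioo (0 : ℝ) 1) (n : ℕ) :
    ∃! z : ℕ → List ℝ,
      (∀ j : ℕ, z j = sWord (cfCoeff α) n ∨ z j = sWord (cfCoeff α) (n + 1)) ∧
      ∀ m : ℕ, IsPrefC α ((List.range m).map z).flatten := by
  have ha := cfCoeff_pos hirr hα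
  have hu := (sWord_length_pos (cfCoeff α) n).1
  have hv := (sWord_length_pos (cfCoeff α) n).2
  have hne := sWord_noncomm (cfCoeff α) n
  have good : GoodP α (sWord (cfCoeff α) n) (sWord (cfCoeff α) (n + 1)) [] := by
    intro L
    obtain ⟨P, hP1, hP2⟩ := (sWord_gen (cfCoeff α) n (L + 2)).1.to_list
    have hlen := sWord_length (cfCoeff α) ha (n + L)
    have hpre := sWord_isPrefC α ha (n + L)
    rw [show n + (L + 2) = n + L + 2 by ring] at hP2
    refine ⟨P, hP1, ?_, ?_⟩
    · rw [hP2]; omega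
    · rw [List.nil_append, hP2]; exact hpre
  obtain ⟨z, hz, hz'⟩ := good.exists_seq
  refine ⟨z, ⟨hz, hz'⟩, ?_⟩
  rintro w ⟨hw, hw'⟩
  funext j
  induction j using Nat.strong_induction_on with
  | _ j ih =>
    rcases hz j with h1 | h1 <;> rcases hw j with h2 | h2
    · rw [h1, h2]
    · exact (no_split hne hu hv hz hw hz' hw' j (fun i hi => (ih i hi).symm) h1 h2).elim
    · exact (no_split hne hu hv hw hz hw' hz' j ih h2 h1).elim
    · rw [h1, h2]
end
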